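/- For every integer k that is a multiple of 4 with k ≥ 4, there are infinitely many n such that every deterministic OBDD and every nondeterministic OBDD on n variables computing the Boolean function EQS^k_n has width at least 2^{k/4}. -/

import Mathlib

/-- Number of 1s in a binary string ν ∈ {0,1}^n. -/
def countOnes {n : ℕ} (ν : Fin n → Bool) : ℕ :=
  (Finset.univ.filter (fun i => ν i = true)).card

/-- Number of 0s in a binary string ν ∈ {0,1}^n. -/
def countZeros {n : ℕ} (ν : Fin n → Bool) : ℕ :=
  (Finset.univ.filter (fun i => ν i = false)).card

/-- Number of 1s among the first `k` bits. -/
def countOnesFirst (k : ℕ) {n : ℕ} (ν : Fin n → Bool) : ℕ :=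
  (Finset.univ.filter (fun i : Fin n => (i : ℕ) < k ∧ ν i = true)).card

/-- Number of 0s among the first `k` bits. -/
def countZerosFirst (k : ℕ) {n : ℕ} (ν : Fin n → Bool) : ℕ :=
  (Finset.univ.filter (fun i : Fin n => (i : ℕ) < k ∧ ν i = false)).card

/-- A deterministic OBDD of width `d` on `n` Boolean variables. -/
structure DOBDD (n d : ℕ) where
  ord : Equiv.Perm (Fin n)
  T : Fin n → Bool → Fin d → Fin d
  start : Fin d
  Accept : Finset (Fin d)

/-- The node reached by a deterministic OBDD after reading all input bits. -/
def DOBDD.run {n d : ℕ} (M : DOBDD n d) (ν : Fin n → Bool) : Fin d :=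
  (List.finRange n).foldl (fun v j => M.T j (ν (M.ord j)) v) M.start

def DOBDD.accepts {n d : ℕ} (M : DOBDD n d) (ν : Fin n → Bool) : Prop :=
  M.run ν ∈ M.Accept

/-- A deterministic OBDD computes a total Boolean function. -/
def DOBDD.computes {n d : ℕ} (M : DOBDD n d) (f : (Fin n → Bool) → Bool) : Prop :=
  ∀ ν, M.accepts ν ↔ f ν = true

/-- A nondeterministic OBDD of width `d` on `n` Boolean variables. -/
structure NOBDD (n d : ℕ) where
  ord : Equiv.Perm (Fin n)
  T : Fin n → Bool → Fin d → Set (Fin d)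
  start : Fin d
  Accept : Finset (Fin d)

/-- The set of nodes reachable by a nondeterministic OBDD after reading all input bits. -/
def NOBDD.reach {n d : ℕ} (M : NOBDD n d) (ν : Fin n → Bool) : Set (Fin d) :=
  (List.finRange n).foldl (fun S j => {w | ∃ v ∈ S, w ∈ M.T j (ν (M.ord j)) v}) {M.start}

def NOBDD.accepts {n d : ℕ} (M : NOBDD n d) (ν : Fin n → Bool) : Prop :=
  ∃ v ∈ M.reach ν, v ∈ M.Accept

/-- A nondeterministic OBDD computes a total Boolean function. -/
def NOBDD.computes {n d : ℕ} (M : NOBDD n d) (f : (Fin n → Bool) → Bool) : Prop :=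
  ∀ ν, M.accepts ν ↔ f ν = true

/-- The class of Boolean functions on n variables computed by deterministic
OBDDs of width at most `w`. -/
def OBDDclass (n w : ℕ) : Set ((Fin n → Bool) → Bool) :=
  {f | ∃ d, d ≤ w ∧ ∃ M : DOBDD n d, M.computes f}

/-- The class of Boolean functions on n variables computed by nondeterministic
OBDDs of width at most `w`. -/
def NOBDDclass (n w : ℕ) : Set ((Fin n → Bool) → Bool) :=
  {f | ∃ d, d ≤ w ∧ ∃ M : NOBDD n d, M.computes f}

/-- Final probability distribution of a stable probabilistic OBDD given by the pair of
left-stochastic matrices `A`, variable order `ord`, and initial node `s`. -/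
noncomputable def stableProbRun {n d : ℕ} (A : Bool → Matrix (Fin d) (Fin d) ℝ)
    (ord : Equiv.Perm (Fin n)) (s : Fin d) (ν : Fin n → Bool) : Fin d → ℝ :=
  (List.finRange n).foldl (fun v j => (A (ν (ord j))).mulVec v)
    (fun i => if i = s then 1 else 0)

/-- Final quantum state of a stable ID quantum OBDD given by the pair of matrices `U`
and the initial computational-basis state `q0`, reading bits in the natural order. -/
noncomputable def quantumRunStable {n d : ℕ} (U : Bool → Matrix (Fin d) (Fin d) ℂ) (q0 : Fin d)
    (ν : Fin n → Bool) : Fin d → ℂ :=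
  (List.finRange n).foldl (fun ψ j => (U (ν j)).mulVec ψ)
    (fun i => if i = q0 then 1 else 0)

/-- A quantum OBDD of width `d` on `n` Boolean variables. -/
structure QOBDD (n d : ℕ) where
  ord : Equiv.Perm (Fin n)
  U : Fin n → Bool → Matrix (Fin d) (Fin d) ℂ
  unitary : ∀ j b, U j b ∈ Matrix.unitaryGroup (Fin d) ℂ
  q0 : Fin d
  Accept : Finset (Fin d)

/-- The final state of a quantum OBDD on input ν. -/
noncomputable def QOBDD.finalState {n d : ℕ} (M : QOBDD n d) (ν : Fin n → Bool) : Fin d → ℂ :=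
  (List.finRange n).foldl (fun ψ j => (M.U j (ν (M.ord j))).mulVec ψ)
    (fun i => if i = M.q0 then 1 else 0)

/-- The acceptance probability of a quantum OBDD on input ν. -/
noncomputable def QOBDD.acceptProb {n d : ℕ} (M : QOBDD n d) (ν : Fin n → Bool) : ℝ :=
  ∑ i ∈ M.Accept, Complex.normSq (M.finalState ν i)

/-- `NotO_n(ν) = 0` iff `#0(ν) = #1(ν)`. -/
def NotO (n : ℕ) (ν : Fin n → Bool) : Bool := !decide (countZeros ν = countOnes ν)

/-- `NotSQUARE_n(ν) = 0` iff `(#0(ν))² = #1(ν)`. -/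
def NotSQUARE (n : ℕ) (ν : Fin n → Bool) : Bool := !decide ((countZeros ν) ^ 2 = countOnes ν)

/-- `NotPOWER_n(ν) = 0` iff `2^{#0(ν)} = #1(ν)`. -/
def NotPOWER (n : ℕ) (ν : Fin n → Bool) : Bool := !decide (2 ^ (countZeros ν) = countOnes ν)

/-- `MOD^k_n(ν) = 1` iff `#1(ν) ≡ 0 (mod k)`. -/
def MODf (n k : ℕ) (ν : Fin n → Bool) : Bool := decide (countOnes ν % k = 0)

/-- `NotO^k_n(ν) = 0` iff `#^k_0(ν) = #^k_1(ν) = k/2`. -/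
def NotOk (n k : ℕ) (ν : Fin n → Bool) : Bool :=
  !decide (countZerosFirst k ν = k / 2 ∧ countOnesFirst k ν = k / 2)

/-- The ordered subsequence of value bits `ν_{2i}` (1-indexed, `1 ≤ i ≤ k/2`) whose
marker bit `ν_{2i-1}` equals `b`; `b = false` gives `α(ν)` and `b = true` gives `β(ν)`. -/
def valueSubseq {n : ℕ} (k : ℕ) (b : Bool) (ν : Fin n → Bool) : List Bool :=
  (List.range (k / 2)).filterMap (fun j =>
    if h : 2 * j + 1 < n then
      if ν ⟨2 * j, by omega⟩ = b then some (ν ⟨2 * j + 1, h⟩) else none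
    else none)

/-- `EQS^k_n(ν) = 1` iff `α(ν) = β(ν)`. -/
def EQS (n k : ℕ) (ν : Fin n → Bool) : Bool :=
  decide (valueSubseq k false ν = valueSubseq k true ν)

/-- `NotEQS^k_n(ν) = 1 - EQS^k_n(ν)`. -/
def NotEQS (n k : ℕ) (ν : Fin n → Bool) : Bool := !(EQS n k ν)

/-!
Cut the computation of an OBDD at the moment when exactly half of the `k / 2` value bits have been
read. Give marker `0` to the value bits read before the cut and marker `1` to the others, so that
`α(ν)` is chosen by the first half of the computation and `β(ν)` by the second. The `2 ^ (k / 4)`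
inputs in which both strings spell the same word form a fooling set: if accepting paths for two of
them met in one node at the cut, the second half of one could be spliced onto the first half of
the other, and an input with `α(ν) ≠ β(ν)` would be accepted.
-/

theorem filterMap_range_getElem?_count {α : Type*} (p : ℕ → Prop) [DecidablePred p] (l : List α)
    (N : ℕ) :
    (List.range N).filterMap (fun j => if p j then l[Nat.count p j]? else none) =
      l.take (Nat.count p N) := by
  induction N with
  | zero => simp
  | succ N ih =>
    rw [List.range_succ, List.filterMap_append, ih, Nat.count_succ]
    by_cases hN : p N
    · cases h : l[Nat.count p N]? <;> simp [hN, List.take_add_one, h]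
    · simp [hN]

theorem count_eq_card_filter_fin (p : ℕ → Prop) [DecidablePred p] (N : ℕ) :
    Nat.count p N = Finset.card {j : Fin N | p j} := by
  rw [Nat.count_eq_card_filter_range, ← Nat.Iio_eq_range, ← Fin.map_valEmbedding_univ,
    Finset.filter_map, Finset.card_map]
  rfl

theorem count_eq_false_add_count_eq_true (μ : ℕ → Bool) (N : ℕ) :
    Nat.count (μ · = false) N + Nat.count (μ · = true) N = N := by
  simpa [Nat.count_eq_card_filter_range] using
    Finset.card_filter_add_card_filter_not (s := Finset.range N) (μ · = false)

theorem exists_card_filter_lt_eq {α : Type*} {s : Finset α} {g : α → ℕ} (hg : Set.InjOn g s)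
    {m : ℕ} (hm : m ≤ s.card) : ∃ t, (s.filter (g · < t)).card = m := by
  induction m with
  | zero => exact ⟨0, by simp⟩
  | succ m ih =>
    classical
    obtain ⟨t, ht⟩ := ih (by omega)
    have unread_nonempty : (s.filter (¬ g · < t)).Nonempty := by
      rw [← Finset.card_pos]
      have := Finset.card_filter_add_card_filter_not (s := s) (g · < t)
      omega
    obtain ⟨a, ha, a_min⟩ := Finset.exists_min_image _ g unread_nonempty
    simp only [Finset.mem_filter] at ha a_min
    refine ⟨g a + 1, ?_⟩
    have filter_eq : s.filter (g · < g a + 1) = insert a (s.filter (g · < t)) := by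
      ext b
      have := @hg b
      grind
    rw [filter_eq, Finset.card_insert_of_notMem (by simp [ha.2]), ht]

/-- A fooling family for the Boolean function `f` and the partition `S`, `Sᶜ` of its variables:
`f` is `1` on every member, but is `0` on one of the two inputs obtained from two distinct members
by exchanging their restrictions to `S`. It certifies a lower bound on the information that has to
pass from `S` to `Sᶜ` in a nondeterministic computation of `f`. -/
def IsFoolingFamily {ι X : Type*} [DecidableEq ι] (S : Finset ι) (f : (ι → Bool) → Bool)
    (ν : X → ι → Bool) : Prop :=
  (∀ x, f (ν x) = true) ∧
    ∀ x y, f (S.piecewise (ν x) (ν y)) = true → f (S.piecewise (ν y) (ν x)) = true → x = y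

theorem card_le_card_nfa_states_of_fooling {α σ X : Type*} [Fintype σ] [Fintype X] (M : NFA α σ)
    (u v : X → List α) (hmem : ∀ x, u x ++ v x ∈ M.accepts)
    (hfool : ∀ x y, u x ++ v y ∈ M.accepts → u y ++ v x ∈ M.accepts → x = y) :
    Fintype.card X ≤ Fintype.card σ := by
  have accepts_append (x y : List α) :
      x ++ y ∈ M.accepts ↔ ∃ q ∈ M.evalFrom M.start x, y ∈ M.acceptsFrom {q} := by
    rw [NFA.accepts_eq_acceptsFrom_start, NFA.append_mem_acceptsFrom]
    simp only [NFA.mem_acceptsFrom, NFA.mem_evalFrom_iff_exists (S := M.evalFrom M.start x)]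
    tauto
  choose q hqu hqv using fun x => (accepts_append (u x) (v x)).1 (hmem x)
  have q_injective : Function.Injective q := fun x y hxy =>
    hfool x y ((accepts_append _ _).2 ⟨q x, hqu x, hxy ▸ hqv y⟩)
      ((accepts_append _ _).2 ⟨q y, hqu y, hxy ▸ hqv x⟩)
  exact Fintype.card_le_of_injective q q_injective

namespace NOBDD

variable {n d : ℕ}

/-- The variables that `M` reads in its first `t` steps. -/
def varsReadBefore (M : NOBDD n d) (t : ℕ) : Finset (Fin n) := {i | (M.ord.symm i : ℕ) < t}

/-- `M` as an automaton whose letters are the pairs of a step and the bit read in that step. -/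
def toNFA (M : NOBDD n d) : NFA (Fin n × Bool) (Fin d) where
  step v a := M.T a.1 a.2 v
  start := {M.start}
  accept := M.Accept

/-- The word over the alphabet of `M.toNFA` that `M` reads on input `ν`. -/
def readWord (M : NOBDD n d) (ν : Fin n → Bool) : List (Fin n × Bool) :=
  (List.finRange n).map fun j => (j, ν (M.ord j))

theorem accepts_iff_readWord_mem_accepts (M : NOBDD n d) (ν : Fin n → Bool) :
    M.accepts ν ↔ M.readWord ν ∈ M.toNFA.accepts := by
  have step_eq (S : Set (Fin d)) (j : Fin n) (b : Bool) :
      {w | ∃ v ∈ S, w ∈ M.T j b v} = M.toNFA.stepSet S (j, b) := by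
    ext w
    simp [NFA.mem_stepSet, toNFA]
  have reach_eq : M.reach ν = M.toNFA.eval (M.readWord ν) := by
    simp only [reach, step_eq, NFA.eval, NFA.evalFrom, readWord, List.foldl_map]
    rfl
  simp only [accepts, reach_eq, NFA.mem_accepts, NFA.eval, toNFA, Finset.mem_coe, and_comm]

theorem readWord_piecewise (M : NOBDD n d) (t : ℕ) (ν μ : Fin n → Bool) :
    M.readWord ((M.varsReadBefore t).piecewise ν μ) =
      (M.readWord ν).take t ++ (M.readWord μ).drop t := by
  refine List.ext_getElem (by grind [readWord]) fun j _ _ => ?_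
  grind [readWord, varsReadBefore, Finset.piecewise, Equiv.symm_apply_apply]

theorem card_le_width_of_isFoolingFamily {X : Type*} [Fintype X] {M : NOBDD n d}
    {f : (Fin n → Bool) → Bool} (hM : M.computes f) {t : ℕ} {ν : X → Fin n → Bool}
    (hν : IsFoolingFamily (M.varsReadBefore t) f ν) : Fintype.card X ≤ d := by
  have splice_mem_accepts_iff (x y : X) :
      (M.readWord (ν x)).take t ++ (M.readWord (ν y)).drop t ∈ M.toNFA.accepts ↔
        f ((M.varsReadBefore t).piecewise (ν x) (ν y)) = true := by
    rw [← readWord_piecewise, ← accepts_iff_readWord_mem_accepts, hM]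
  rw [← Fintype.card_fin d]
  refine card_le_card_nfa_states_of_fooling M.toNFA (fun x => (M.readWord (ν x)).take t)
    (fun x => (M.readWord (ν x)).drop t) (fun x => ?_) fun x y hxy hyx => ?_
  · rw [splice_mem_accepts_iff, Finset.piecewise_same]
    exact hν.1 x
  · exact hν.2 x y ((splice_mem_accepts_iff x y).1 hxy) ((splice_mem_accepts_iff y x).1 hyx)

end NOBDD

namespace DOBDD

variable {n d : ℕ}

/-- `M` as a nondeterministic OBDD with exactly one successor for every node and bit. -/
def toNOBDD (M : DOBDD n d) : NOBDD n d where
  ord := M.ord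
  T j b v := {M.T j b v}
  start := M.start
  Accept := M.Accept

theorem reach_toNOBDD (M : DOBDD n d) (ν : Fin n → Bool) : M.toNOBDD.reach ν = {M.run ν} :=
  List.foldl_hom (fun v => ({v} : Set (Fin d))) fun v j => by simp [toNOBDD]

theorem computes.toNOBDD {M : DOBDD n d} {f : (Fin n → Bool) → Bool} (hM : M.computes f) :
    M.toNOBDD.computes f := fun ν => by
  rw [← hM ν, NOBDD.accepts, reach_toNOBDD]
  simp [accepts, DOBDD.toNOBDD]

end DOBDD

section EQS

variable {n k : ℕ}

/-- The input with markers `μ`, numbered from `0`, whose value bits with marker `b` spell the word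
`w b`. Value bits beyond the end of that word are `0`. -/
def inputOfWords (n : ℕ) (μ : ℕ → Bool) (w : Bool → List Bool) (i : Fin n) : Bool :=
  let j := (i : ℕ) / 2
  if (i : ℕ) % 2 = 0 then μ j else (w (μ j)).getD (Nat.count (μ · = μ j) j) false

theorem valueSubseq_inputOfWords (hkn : k ≤ n) {μ : ℕ → Bool} {w : Bool → List Bool} {b : Bool}
    (hw : (w b).length = Nat.count (μ · = b) (k / 2)) :
    valueSubseq k b (inputOfWords n μ w) = w b := by
  calc valueSubseq k b (inputOfWords n μ w)
      = (List.range (k / 2)).filterMap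
          (fun j => if μ j = b then (w b)[Nat.count (μ · = b) j]? else none) := by
        refine List.filterMap_congr fun j hj => ?_
        have hjk : j < k / 2 := List.mem_range.1 hj
        have value_lt : 2 * j + 1 < n := by omega
        have value_div : (2 * j + 1) / 2 = j := by omega
        by_cases hμ : μ j = b
        · have index_lt : Nat.count (μ · = b) j < (w b).length :=
            hw ▸ Nat.count_strict_mono hμ hjk
          simp [inputOfWords, value_lt, value_div, hμ, index_lt]
        · simp [inputOfWords, value_lt, hμ]
    _ = w b := by rw [filterMap_range_getElem?_count, ← hw, List.take_length]

theorem EQS_inputOfWords (hkn : k ≤ n) {μ : ℕ → Bool} {w : Bool → List Bool}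
    (hw : ∀ b, (w b).length = Nat.count (μ · = b) (k / 2)) :
    EQS n k (inputOfWords n μ w) = true ↔ w false = w true := by
  rw [EQS, decide_eq_true_iff, valueSubseq_inputOfWords hkn (hw false),
    valueSubseq_inputOfWords hkn (hw true)]

/-- The markers that send the value bits in `S` to `α` and all others to `β`. -/
def markerOf (S : Finset (Fin n)) (j : ℕ) : Bool := decide (∀ i ∈ S, (i : ℕ) ≠ 2 * j + 1)

theorem markerOf_eq_false_iff {S : Finset (Fin n)} {j : ℕ} (hj : 2 * j + 1 < n) :
    markerOf S j = false ↔ ⟨2 * j + 1, hj⟩ ∈ S := by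
  simp [markerOf, Fin.exists_iff, hj]

theorem piecewise_inputOfWords (S : Finset (Fin n)) (u v : List Bool) :
    S.piecewise (inputOfWords n (markerOf S) fun _ => u) (inputOfWords n (markerOf S) fun _ => v) =
      inputOfWords n (markerOf S) fun b => if b then v else u := by
  ext i
  by_cases hi : (i : ℕ) % 2 = 0
  · simp [inputOfWords, hi, Finset.piecewise]
  · have value_eq : 2 * ((i : ℕ) / 2) + 1 = i := by omega
    have marker_iff : markerOf S (i / 2) = false ↔ i ∈ S := by
      simpa [value_eq] using markerOf_eq_false_iff (S := S) (value_eq.trans_lt i.isLt)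
    by_cases hS : i ∈ S
    · simp [inputOfWords, hi, hS, marker_iff.2 hS]
    · simp [inputOfWords, hi, hS, Bool.eq_true_of_not_eq_false (mt marker_iff.1 hS)]

theorem isFoolingFamily_EQS (hkn : k ≤ n) {S : Finset (Fin n)} {m : ℕ}
    (hS : ∀ b, Nat.count (markerOf S · = b) (k / 2) = m) :
    IsFoolingFamily S (EQS n k)
      fun x : List.Vector Bool m => inputOfWords n (markerOf S) fun _ => x.toList := by
  refine ⟨fun x => (EQS_inputOfWords hkn (by simp [hS])).2 rfl, fun x y hxy _ => ?_⟩
  rw [piecewise_inputOfWords, EQS_inputOfWords hkn (by simp [hS])] at hxy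
  exact List.Vector.eq _ _ (by simpa using hxy)

theorem NOBDD.exists_count_markerOf_eq {d : ℕ} (M : NOBDD n d) {K m : ℕ} (hK : 2 * K ≤ n)
    (hm : m ≤ K) : ∃ t, Nat.count (markerOf (M.varsReadBefore t) · = false) K = m := by
  let valueVar (j : Fin K) : Fin n := ⟨2 * j + 1, by omega⟩
  have time_injective : Function.Injective fun j => (M.ord.symm (valueVar j) : ℕ) := by
    intro j j' h
    simpa [valueVar, Fin.val_inj] using h
  obtain ⟨t, ht⟩ := exists_card_filter_lt_eq (s := Finset.univ) time_injective.injOn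
    (hm.trans_eq (Finset.card_fin K).symm)
  refine ⟨t, ?_⟩
  rw [count_eq_card_filter_fin, ← ht]
  congr 1 with j
  rw [Finset.mem_filter_univ, markerOf_eq_false_iff (valueVar j).isLt]
  simp [varsReadBefore, valueVar]

theorem NOBDD.two_pow_le_width_of_computes_EQS {d : ℕ} {M : NOBDD n d} (hk : 4 ∣ k) (hkn : k ≤ n)
    (hM : M.computes (EQS n k)) : 2 ^ (k / 4) ≤ d := by
  obtain ⟨t, ht⟩ := M.exists_count_markerOf_eq (K := k / 2) (m := k / 4) (by omega) (by omega)
  have balanced (b : Bool) : Nat.count (markerOf (M.varsReadBefore t) · = b) (k / 2) = k / 4 := by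
    have := count_eq_false_add_count_eq_true (markerOf (M.varsReadBefore t)) (k / 2)
    cases b <;> omega
  simpa using card_le_width_of_isFoolingFamily hM (isFoolingFamily_EQS hkn balanced)

end EQS

theorem EQS_lower_bound_general {n k : ℕ} (hk : 4 ∣ k) (hkn : k ≤ n) :
    (∀ (d : ℕ) (M : DOBDD n d), M.computes (EQS n k) → 2 ^ (k / 4) ≤ d) ∧
      (∀ (d : ℕ) (M : NOBDD n d), M.computes (EQS n k) → 2 ^ (k / 4) ≤ d) :=
  ⟨fun _ _ hM => NOBDD.two_pow_le_width_of_computes_EQS hk hkn hM.toNOBDD,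
    fun _ _ hM => NOBDD.two_pow_le_width_of_computes_EQS hk hkn hM⟩

/-- For every `k` a multiple of 4 with `k ≥ 4`, there are infinitely many `n` such that
any deterministic OBDD and any nondeterministic OBDD computing `EQS^k_n` has width at
least `2^{k/4}`. -/
theorem EQS_lower_bound (k : ℕ) (hk : 4 ∣ k) (h1 : 4 ≤ k) :
    ∀ N : ℕ, ∃ n, N ≤ n ∧ k ≤ n ∧
      (∀ (d : ℕ) (M : DOBDD n d), M.computes (EQS n k) → 2 ^ (k / 4) ≤ d) ∧
      (∀ (d : ℕ) (M : NOBDD n d), M.computes (EQS n k) → 2 ^ (k / 4) ≤ d) :=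
  fun N => ⟨N + k, N.le_add_right k, k.le_add_left N, EQS_lower_bound_general hk (k.le_add_left N)⟩
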